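/- Every instance 𝓘 of the oblivious knapsack problem admits a 2-robust universal policy: there exists a permutation Π of the items of 𝓘 such that v(Opt(𝓘,C)) ≤ 2·v(Π(C)) for every capacity C with 0 ≤ C ≤ l(𝓘). -/

import Mathlib

/-!
The policy is built by inserting the items in order of increasing size. Fix a linear order of the
items that refines the order by density `v / l` (ties are broken by an injective key `k`). A new
item `x`, at least as large as everything present, goes to the front of the list if it is worth at
least as much as all present items of larger key together; otherwise it goes right before the
first item of smaller key.

Two properties survive every insertion. `Dominating`: each item is worth at least as much as all
the items of larger key behind it. `HeadValuable`: the head is worth at least as much as any item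
`s` that outweighs all the items of larger key. Both rest on the fact that an item that is at least
as large and at least as dense as another one is at least as valuable.

Let all items of the list have size at most `C`. Unless everything fits, some item `s` is the
first one not to fit when the items are taken by decreasing key. If `D` is the set of items of
larger key than `s`, then any feasible set has value at most `v(D) + v(s)`
(`value_le_add_critical`). By `Dominating` the packing is worth at least `v(D)`
(`Dominating.le_pack`): the first packed item outside `D` compensates for the items of `D` behind
it. By `HeadValuable`, and because the head is always packed, the packing is also worth
at least `v(s)`. This gives the factor `2`. For a capacity below the size of the last inserted
item `x`, neither the packing nor a feasible set contains `x`, so the bound is inherited from the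
list before the insertion.
-/

/-- The packing of a list of items (a universal policy) for capacity `C`:
scan the list in order, starting from the empty packing, and add an item
whenever its size fits into the remaining capacity. -/
def pack {α R : Type*} [LinearOrder R] [Sub R] (size : α → R) : R → List α → List α
  | _, [] => []
  | C, x :: xs => if size x ≤ C then x :: pack size (C - size x) xs else pack size C xs

namespace Knapsack

variable {α K : Type*} [LinearOrder K]

/-! ### Values of items of larger key, and the two invariants -/

/-- Total value of the items of `L` whose key is larger than the key of `x`. -/
def above (v : α → ℚ) (k : α → K) (L : List α) (x : α) : ℚ :=
  ((L.filter fun p => k x < k p).map v).sum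

/-- Every item is worth at least as much as all the items of larger key behind it. -/
def Dominating (v : α → ℚ) (k : α → K) : List α → Prop
  | [] => True
  | x :: L => above v k L x ≤ v x ∧ Dominating v k L

/-- The head is worth at least as much as each item that outweighs all the items of larger key. -/
def HeadValuable (v : α → ℚ) (k : α → K) (L : List α) : Prop :=
  ∀ s ∈ L, above v k L s ≤ v s → ∃ h ∈ L.head?, v s ≤ v h

lemma sum_map_nonneg {v : α → ℚ} (hv : ∀ i, 0 ≤ v i) (L : List α) : 0 ≤ (L.map v).sum :=
  List.sum_nonneg (by simpa using fun a _ => hv a)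

lemma sum_filter_mono {v : α → ℚ} (hv : ∀ i, 0 ≤ v i) {p q : α → Prop} [DecidablePred p]
    [DecidablePred q] (L : List α) (h : ∀ i, p i → q i) :
    ((L.filter p).map v).sum ≤ ((L.filter q).map v).sum := by
  induction L with
  | nil => simp
  | cons x L ih =>
    have := hv x
    by_cases hp : p x
    · simp [hp, h x hp, ih]
    · by_cases hq : q x <;> simp [hp, hq] <;> linarith

lemma above_cons (v : α → ℚ) (k : α → K) (L : List α) (x s : α) :
    above v k (x :: L) s = (if k s < k x then v x else 0) + above v k L s := by
  by_cases h : k s < k x <;> simp [above, h]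

lemma above_perm (v : α → ℚ) (k : α → K) {L M : List α} (h : L.Perm M) (s : α) :
    above v k L s = above v k M s :=
  ((h.filter _).map v).sum_eq

lemma above_anti {v : α → ℚ} (hv : ∀ i, 0 ≤ v i) (k : α → K) (L : List α) {s t : α}
    (h : k s ≤ k t) : above v k L t ≤ above v k L s :=
  sum_filter_mono hv L fun _ hi => h.trans_lt hi

lemma above_nonneg {v : α → ℚ} (hv : ∀ i, 0 ≤ v i) (k : α → K) (L : List α) (s : α) :
    0 ≤ above v k L s :=
  sum_map_nonneg hv _

/-! ### Packings of dominating lists -/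

/-- A feasible set of items of larger key than `s` is worth no more than the packing: the first
packed item outside the set makes up for the members behind it. -/
lemma Dominating.le_pack {v l : α → ℚ} (hv : ∀ i, 0 ≤ v i) (hl : ∀ i, 0 < l i) {k : α → K}
    {s : α} {L : List α} (hL : Dominating v k L) {C : ℚ} (hC : above l k L s ≤ C) :
    above v k L s ≤ ((pack l C L).map v).sum := by
  induction L generalizing C with
  | nil => simp [above, pack]
  | cons x L ih =>
    obtain ⟨hx, hL⟩ := hL
    rw [above_cons] at hC ⊢
    have h0 := above_nonneg (fun i => (hl i).le) k L s
    by_cases hs : k s < k x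
    · rw [if_pos hs] at hC ⊢
      rw [pack, if_pos (by linarith)]
      have := ih hL (C := C - l x) (by linarith)
      simpa using this
    · rw [if_neg hs, zero_add] at hC ⊢
      by_cases hf : l x ≤ C
      · rw [pack, if_pos hf, List.map_cons, List.sum_cons]
        have := sum_map_nonneg hv (pack l (C - l x) L)
        have := above_anti hv k L (not_lt.1 hs)
        linarith
      · rw [pack, if_neg hf]
        exact ih hL hC

lemma pack_eq_self {l : α → ℚ} (hl : ∀ i, 0 < l i) {L : List α} {C : ℚ}
    (h : (L.map l).sum ≤ C) : pack l C L = L := by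
  induction L generalizing C with
  | nil => rfl
  | cons x L ih =>
    rw [List.map_cons, List.sum_cons] at h
    have := sum_map_nonneg (fun i => (hl i).le) L
    rw [pack, if_pos (by linarith), ih (by linarith)]

/-! ### Insertion by key -/

lemma le_of_key_lt {v l : α → ℚ} (hv : ∀ i, 0 ≤ v i) (hl : ∀ i, 0 < l i) {k : α → K}
    (hk : ∀ i j, k i < k j → v i * l j ≤ v j * l i) {q x : α} (h : k q < k x)
    (hqx : l q ≤ l x) : v q ≤ v x := by
  have h1 := hk q x h
  have h2 := mul_le_mul_of_nonneg_left hqx (hv q)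
  exact le_of_mul_le_mul_right (h2.trans h1) (hl q)

/-- Insert `x` before the first item of smaller key. -/
abbrev ins (k : α → K) (x : α) (L : List α) : List α :=
  L.orderedInsert (fun a b => k b < k a) x

lemma Dominating.ins {v l : α → ℚ} (hv : ∀ i, 0 ≤ v i) (hl : ∀ i, 0 < l i) {k : α → K}
    (hk : ∀ i j, k i < k j → v i * l j ≤ v j * l i) {x : α} {L : List α}
    (hL : Dominating v k L) (hx : ∀ q ∈ L, l q ≤ l x) : Dominating v k (ins k x L) := by
  induction L with
  | nil => simpa [Knapsack.ins, Dominating, above] using hv x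
  | cons b L ih =>
    by_cases h : k b < k x
    · have e : Knapsack.ins k x (b :: L) = x :: b :: L := by simp [Knapsack.ins, h]
      rw [e]
      refine ⟨?_, hL⟩
      rw [above_cons, if_neg h.not_gt, zero_add]
      -- the items behind `b` of larger key than `x` are already outweighed by `b`
      exact (above_anti hv k L h.le).trans
        (hL.1.trans (le_of_key_lt hv hl hk h (hx b (by simp))))
    · have e : Knapsack.ins k x (b :: L) = b :: Knapsack.ins k x L := by simp [Knapsack.ins, h]
      rw [e]
      refine ⟨?_, ih hL.2 fun q hq => hx q (by simp [hq])⟩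
      rw [above_perm v k (List.perm_orderedInsert _ x L), above_cons, if_neg h, zero_add]
      exact hL.1

lemma pack_ins {l : α → ℚ} (hl : ∀ i, 0 < l i) (k : α → K) {x : α} (L : List α) {C : ℚ}
    (hC : C < l x) : pack l C (ins k x L) = pack l C L := by
  induction L generalizing C with
  | nil => simp [ins, pack, hC]
  | cons b L ih =>
    by_cases h : k b < k x
    · have e : ins k x (b :: L) = x :: b :: L := by simp [ins, h]
      rw [e, pack, if_neg hC.not_ge]
    · have e : ins k x (b :: L) = b :: ins k x L := by simp [ins, h]
      have := hl b
      rw [e, pack, pack, ih hC, ih (C := C - l b) (by linarith)]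

/-! ### The upper bound for feasible sets -/

/-- When the items do not all fit together and are taken by decreasing key, some item is the first
not to fit. -/
lemma exists_critical [DecidableEq α] {l : α → ℚ} {k : α → K} (hk : Function.Injective k)
    {C : ℚ} (hC : 0 ≤ C) (A : Finset α) (h : C < ∑ i ∈ A, l i) :
    ∃ s ∈ A, ∑ i ∈ A with k s < k i, l i ≤ C ∧ C < ∑ i ∈ A with k s < k i, l i + l s := by
  induction A using Finset.induction_on_min_value k with
  | empty => simp at h; linarith
  | insert a B ha hmin ih =>
    by_cases hB : C < ∑ i ∈ B, l i
    · obtain ⟨s, hs, h1⟩ := ih hB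
      refine ⟨s, by simp [hs], ?_⟩
      rwa [Finset.filter_insert, if_neg (hmin s hs).not_gt]
    · refine ⟨a, by simp, ?_⟩
      have e : B.filter (fun i => k a < k i) = B := Finset.filter_true_of_mem fun i hi =>
        lt_of_le_of_ne (hmin i hi) fun e => ha (hk e ▸ hi)
      rw [Finset.filter_insert, if_neg (lt_irrefl _), e]
      rw [Finset.sum_insert ha] at h
      exact ⟨not_lt.1 hB, by linarith⟩

/-- The linear relaxation bound: a feasible set is worth at most the items of larger key than the
critical item `s`, plus `s` itself. -/
lemma value_le_add_critical [DecidableEq α] {v l : α → ℚ} (hv : ∀ i, 0 ≤ v i)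
    (hl : ∀ i, 0 < l i) {k : α → K} (hk : Function.Injective k)
    (hd : ∀ i j, k i < k j → v i * l j ≤ v j * l i) {C : ℚ} {A S : Finset α} (hS : S ⊆ A) {s : α}
    (hSC : ∑ i ∈ S, l i ≤ C) (hC : C < ∑ i ∈ A with k s < k i, l i + l s) :
    ∑ i ∈ S, v i ≤ ∑ i ∈ A with k s < k i, v i + v s := by
  set D := A.filter fun i => k s < k i with hD
  have h1 : ∑ i ∈ S \ D, v i * l s ≤ ∑ i ∈ S \ D, v s * l i := by
    refine Finset.sum_le_sum fun i hi => ?_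
    simp only [hD, Finset.mem_sdiff, Finset.mem_filter, not_and, not_lt] at hi
    rcases (hi.2 (hS hi.1)).lt_or_eq with h | h
    · exact hd _ _ h
    · rw [hk h]
  have h2 : ∑ i ∈ D \ S, v s * l i ≤ ∑ i ∈ D \ S, v i * l s := by
    refine Finset.sum_le_sum fun i hi => hd _ _ ?_
    simp only [hD, Finset.mem_sdiff, Finset.mem_filter] at hi
    exact hi.1.2
  rw [← Finset.sum_mul, ← Finset.mul_sum] at h1 h2
  have e1 := Finset.sum_sdiff_sub_sum_sdiff (s₁ := D) (s₂ := S) (f := v)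
  have e2 := Finset.sum_sdiff_sub_sum_sdiff (s₁ := D) (s₂ := S) (f := l)
  have h3 : v s * (∑ i ∈ S, l i - ∑ i ∈ D, l i) ≤ v s * l s :=
    mul_le_mul_of_nonneg_left (by linarith) (hv s)
  have h4 : (∑ i ∈ S, v i - ∑ i ∈ D, v i) * l s ≤ v s * l s := by
    refine le_trans ?_ h3
    rw [← e1, ← e2]
    linarith
  have := le_of_mul_le_mul_right h4 (hl s)
  linarith

/-! ### The factor two -/

lemma sum_filter_toFinset [DecidableEq α] (f : α → ℚ) (k : α → K) {L : List α} (hL : L.Nodup)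
    (s : α) : ∑ i ∈ L.toFinset with k s < k i, f i = above f k L s := by
  rw [above, ← List.sum_toFinset f (hL.filter _), List.toFinset_filter]
  simp

/-- The factor `2` for capacities at which every single item of the list fits. -/
lemma two_robust_of_fits [DecidableEq α] {v l : α → ℚ} (hv : ∀ i, 0 ≤ v i)
    (hl : ∀ i, 0 < l i) {k : α → K} (hk : Function.Injective k)
    (hd : ∀ i j, k i < k j → v i * l j ≤ v j * l i) {L : List α} (hL : L.Nodup)
    (h1 : Dominating v k L) (h2 : HeadValuable v k L) {C : ℚ} (hC : 0 ≤ C)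
    (hfit : ∀ i ∈ L, l i ≤ C) {S : Finset α} (hS : S ⊆ L.toFinset) (hSC : ∑ i ∈ S, l i ≤ C) :
    ∑ i ∈ S, v i ≤ 2 * ((pack l C L).map v).sum := by
  by_cases hall : ∑ i ∈ L.toFinset, l i ≤ C
  · have hle := Finset.sum_le_sum_of_subset_of_nonneg hS fun i _ _ => hv i
    rw [List.sum_toFinset _ hL] at hall hle
    rw [pack_eq_self hl hall]
    have := sum_map_nonneg hv L
    linarith
  · obtain ⟨s, hs, hs1, hs2⟩ := exists_critical hk hC _ (not_le.1 hall)
    have hub := value_le_add_critical hv hl hk hd hS hSC hs2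
    rw [sum_filter_toFinset _ _ hL] at hs1 hub
    have hD := h1.le_pack hv hl hs1
    have hs3 : v s ≤ ((pack l C L).map v).sum := by
      by_cases hsw : above v k L s ≤ v s
      · obtain ⟨b, hb, hsb⟩ := h2 s (by simpa using hs) hsw
        cases L with
        | nil => simp at hb
        | cons c L =>
          obtain rfl : c = b := by simpa using hb
          rw [pack, if_pos (hfit c (by simp)), List.map_cons, List.sum_cons]
          have := sum_map_nonneg hv (pack l (C - l c) L)
          linarith
      · linarith
    linarith

/-- Insertion of a largest item preserves both invariants and, below its size, the packings. -/
lemma exists_insert {v l : α → ℚ} (hv : ∀ i, 0 ≤ v i) (hl : ∀ i, 0 < l i) {k : α → K}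
    (hk : Function.Injective k) (hd : ∀ i j, k i < k j → v i * l j ≤ v j * l i)
    {L : List α} (h1 : Dominating v k L) (h2 : HeadValuable v k L) {x : α}
    (hx : ∀ q ∈ L, l q ≤ l x) :
    ∃ M : List α, M.Perm (x :: L) ∧ Dominating v k M ∧ HeadValuable v k M ∧
      ∀ C < l x, pack l C M = pack l C L := by
  have hmono : ∀ s, above v k L s ≤ above v k (x :: L) s := fun s => by
    rw [above_cons]
    have := hv x
    split_ifs <;> linarith
  by_cases hsw : above v k L x ≤ v x
  · refine ⟨x :: L, .refl _, ⟨hsw, h1⟩, fun s hs hsv => ⟨x, by simp, ?_⟩,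
      fun C hC => by rw [pack, if_neg hC.not_ge]⟩
    rcases List.mem_cons.1 hs with rfl | hs
    · exact le_rfl
    rcases lt_trichotomy (k s) (k x) with h | h | h
    · exact le_of_key_lt hv hl hd h (hx s hs)
    · rw [hk h]
    · -- `s` is one of the items of larger key that `x` outweighs
      refine le_trans ?_ hsw
      refine List.single_le_sum (l := (L.filter fun p => k x < k p).map v)
        (fun y hy => ?_) _ (List.mem_map_of_mem ?_)
      · obtain ⟨a, -, rfl⟩ := List.mem_map.1 hy
        exact hv a
      · simpa using ⟨hs, h⟩
  · have hp := List.perm_orderedInsert (fun a b => k b < k a) x L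
    refine ⟨ins k x L, hp, h1.ins hv hl hd hx, fun s hs hsv => ?_,
      fun C hC => pack_ins hl k L hC⟩
    rw [above_perm v k hp] at hsv
    have hsL := (hmono s).trans hsv
    rcases List.mem_cons.1 (hp.mem_iff.1 hs) with rfl | hs
    · exact absurd hsL hsw
    obtain ⟨b, hb, hsb⟩ := h2 s hs hsL
    cases L with
    | nil => simp at hb
    | cons c L =>
      obtain rfl : c = b := by simpa using hb
      by_cases h : k c < k x
      · exact ⟨x, by simp [ins, h], hsb.trans (le_of_key_lt hv hl hd h (hx c (by simp)))⟩
      · exact ⟨c, by simp [ins, h], hsb⟩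

lemma exists_policy [DecidableEq α] {v l : α → ℚ} (hv : ∀ i, 0 ≤ v i) (hl : ∀ i, 0 < l i)
    {k : α → K} (hk : Function.Injective k) (hd : ∀ i j, k i < k j → v i * l j ≤ v j * l i)
    (A : Finset α) :
    ∃ L : List α, L.Nodup ∧ L.toFinset = A ∧ Dominating v k L ∧ HeadValuable v k L ∧
      ∀ C, 0 ≤ C → ∀ S ⊆ A, ∑ i ∈ S, l i ≤ C →
        ∑ i ∈ S, v i ≤ 2 * ((pack l C L).map v).sum := by
  induction A using Finset.induction_on_max_value l with
  | empty =>
    refine ⟨[], by simp, by simp, trivial, by simp [HeadValuable], fun C _ S hS _ => ?_⟩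
    simp [Finset.subset_empty.1 hS, pack]
  | insert x B hxB hmax ih =>
    obtain ⟨L, hL, rfl, h1, h2, hrob⟩ := ih
    simp only [List.mem_toFinset] at hmax hxB
    obtain ⟨M, hM, hM1, hM2, hMp⟩ := exists_insert hv hl hk hd h1 h2 hmax
    have hMn : M.Nodup := hM.nodup_iff.2 (List.nodup_cons.2 ⟨hxB, hL⟩)
    have hMs : M.toFinset = insert x L.toFinset := by
      rw [List.toFinset_eq_of_perm _ _ hM, List.toFinset_cons]
    refine ⟨M, hMn, hMs, hM1, hM2, fun C hC S hS hSC => ?_⟩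
    by_cases hxC : l x ≤ C
    · refine two_robust_of_fits hv hl hk hd hMn hM1 hM2 hC (fun i hi => ?_) (hMs ▸ hS) hSC
      rcases List.mem_cons.1 (hM.mem_iff.1 hi) with rfl | hi
      · exact hxC
      · exact (hmax i hi).trans hxC
    · rw [hMp C (not_le.1 hxC)]
      refine hrob C hC S ((Finset.subset_insert_iff_of_notMem fun hxS => hxC ?_).1 hS) hSC
      exact (Finset.single_le_sum (fun i _ => (hl i).le) hxS).trans hSC

end Knapsack

/-- Every instance of the oblivious knapsack problem admits a
2-robust universal policy: there is a permutation `P` of the items such that for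
every capacity `0 ≤ C ≤ l(𝓘)` and every feasible set `S` (in particular the
optimal one), `v(S) ≤ 2 · v(P(C))`. -/
theorem exists_two_robust_universal_policy {n : ℕ} (v l : Fin n → ℚ)
    (hv : ∀ i, 0 ≤ v i) (hl : ∀ i, 0 < l i) :
    ∃ P : List (Fin n), P.Nodup ∧ (∀ i, i ∈ P) ∧
      ∀ C : ℚ, 0 ≤ C → C ≤ ∑ i, l i →
        ∀ S : Finset (Fin n), ∑ i ∈ S, l i ≤ C →
          ∑ i ∈ S, v i ≤ 2 * ((pack l C P).map v).sum := by
  -- the key is the density, with ties broken by the index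
  let k : Fin n → ℚ ×ₗ Fin n := fun i => toLex (v i / l i, i)
  have hk : Function.Injective k := fun i j h => by
    have := congrArg (fun z => (ofLex z).2) h
    simpa [k] using this
  have hd : ∀ i j, k i < k j → v i * l j ≤ v j * l i := fun i j h => by
    rw [← div_le_div_iff₀ (hl i) (hl j)]
    rcases Prod.Lex.toLex_lt_toLex.1 h with h | h
    · exact h.le
    · exact h.1.le
  obtain ⟨L, hL, hA, -, -, h⟩ := Knapsack.exists_policy hv hl hk hd Finset.univ
  refine ⟨L, hL, fun i => ?_, fun C hC _ S hS => h C hC S (Finset.subset_univ S) hS⟩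
  rw [← List.mem_toFinset, hA]
  exact Finset.mem_univ i
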